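/- arXiv:1205.4480 — 6 statements merged into one kernel-verified Lean document; each statement's English description precedes it below -/
import Mathlib

section
/- For every formal power series F ∈ ℂ⟦X⟧ and every natural number n, there exists an (n,n) Padé solution (P₀, Q₀) for F with Q₀ ≠ 0 such that every (n,n) Padé solution (P, Q) for F is of the form P = L·P₀ and Q = L·Q₀ for some polynomial L ∈ ℂ[X]. (Every solution of the Padé linear system is a polynomial multiple of the solution of minimal degree.) -/
/-- `(P, Q)` is an `(n,n)` Padé solution for the formal power series `F`:
both polynomials have degree at most `n`, and `X^(2n+1)` divides `Q·F − P`
in `ℂ⟦X⟧` (polynomials being regarded as power series). -/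
def IsPadeSolution (F : PowerSeries ℂ) (n : ℕ) (P Q : Polynomial ℂ) : Prop :=
  P.degree ≤ (n : ℕ) ∧ Q.degree ≤ (n : ℕ) ∧
    (PowerSeries.X : PowerSeries ℂ) ^ (2 * n + 1) ∣
      ((Q : PowerSeries ℂ) * F - (P : PowerSeries ℂ))

open Polynomial in
theorem pade_exists (F : PowerSeries ℂ) (n : ℕ) :
    ∃ P Q : Polynomial ℂ, IsPadeSolution F n P Q ∧ Q ≠ 0 := by
  let f : (Fin (n+1) → ℂ) →ₗ[ℂ] (Fin n → ℂ) :=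
    { toFun := fun v i => PowerSeries.coeff (n + 1 + i)
        (((((degreeLTEquiv ℂ (n+1)).symm v : degreeLT ℂ (n+1)) : ℂ[X]) : PowerSeries ℂ) * F)
      map_add' := by
        intro v w
        ext i
        simp [add_mul]
      map_smul' := by
        intro c v
        ext i
        simp [Polynomial.coe_smul] }
  have hk : LinearMap.ker f ≠ ⊥ := f.ker_ne_bot_of_finrank_lt (by simp)
  obtain ⟨v, hv, hv0⟩ := (Submodule.ne_bot_iff _).mp hk
  let q := (degreeLTEquiv ℂ (n+1)).symm v
  have hq0 : (q : ℂ[X]) ≠ 0 := by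
    intro h
    apply hv0
    have : q = 0 := Subtype.ext h
    simpa [q] using this
  refine ⟨PowerSeries.trunc (n+1) ((q : ℂ[X]) * F), q, ⟨?_, ?_, ?_⟩, hq0⟩
  · exact degree_le_of_natDegree_le (Nat.lt_succ_iff.mp (PowerSeries.natDegree_trunc_lt _ n))
  · have := mem_degreeLT.mp q.2
    rw [degree_eq_natDegree hq0] at this ⊢
    norm_cast at this ⊢
    omega
  · rw [PowerSeries.X_pow_dvd_iff]
    intro m hm
    rw [map_sub, Polynomial.coeff_coe, PowerSeries.coeff_trunc]
    split_ifs with h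
    · simp
    · have h1 : f v = 0 := hv
      have h2 := congrFun h1 ⟨m - (n+1), by omega⟩
      have h3 : n + 1 + (m - (n+1)) = m := by omega
      simp only [f, LinearMap.coe_mk, AddHom.coe_mk, h3, Pi.zero_apply] at h2
      simpa [q] using h2

theorem pade_cross (F : PowerSeries ℂ) (n : ℕ) (P Q P' Q' : Polynomial ℂ)
    (h : IsPadeSolution F n P Q) (h' : IsPadeSolution F n P' Q') : P * Q' = P' * Q := by
  obtain ⟨h1, h2, h3⟩ := h
  obtain ⟨h1', h2', h3'⟩ := h'
  have hd : (PowerSeries.X : PowerSeries ℂ) ^ (2 * n + 1) ∣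
      ((P * Q' - P' * Q : Polynomial ℂ) : PowerSeries ℂ) := by
    have := dvd_sub (h3'.mul_left (Q : PowerSeries ℂ)) (h3.mul_left (Q' : PowerSeries ℂ))
    convert this using 1
    push_cast
    ring
  rw [← sub_eq_zero]
  have hdeg : (P * Q' - P' * Q).natDegree ≤ n + n := by
    refine (Polynomial.natDegree_sub_le _ _).trans (max_le ?_ ?_)
    · exact Polynomial.natDegree_mul_le_of_le (Polynomial.natDegree_le_of_degree_le h1)
        (Polynomial.natDegree_le_of_degree_le h2')
    · exact Polynomial.natDegree_mul_le_of_le (Polynomial.natDegree_le_of_degree_le h1')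
        (Polynomial.natDegree_le_of_degree_le h2)
  rw [PowerSeries.X_pow_dvd_iff] at hd
  ext m
  by_cases hm : m < 2 * n + 1
  · have := hd m hm
    rw [Polynomial.coeff_coe] at this
    simpa using this
  · rw [Polynomial.coeff_eq_zero_of_natDegree_lt (by omega)]
    simp

/-- There is a minimal-degree `(n,n)` Padé solution `(P₀, Q₀)` with `Q₀ ≠ 0`
such that every `(n,n)` Padé solution is a polynomial multiple of it. -/
theorem pade_minimal_solution (F : PowerSeries ℂ) (n : ℕ) :
    ∃ P₀ Q₀ : Polynomial ℂ, IsPadeSolution F n P₀ Q₀ ∧ Q₀ ≠ 0 ∧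
      ∀ P Q : Polynomial ℂ, IsPadeSolution F n P Q →
        ∃ L : Polynomial ℂ, P = L * P₀ ∧ Q = L * Q₀ := by
  classical
  obtain ⟨P1, Q1, hs1, hQ1⟩ := pade_exists F n
  have hex : ∃ d, ∃ P Q : Polynomial ℂ, IsPadeSolution F n P Q ∧ Q ≠ 0 ∧ Q.natDegree = d :=
    ⟨_, P1, Q1, hs1, hQ1, rfl⟩
  obtain ⟨P₀, Q₀, hs, hQ, hd⟩ := Nat.find_spec hex
  refine ⟨P₀, Q₀, hs, hQ, fun P Q hPQ => ?_⟩
  have hc := pade_cross F n P Q P₀ Q₀ hPQ hs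
  have hdiv := EuclideanDomain.div_add_mod Q Q₀
  set L := Q / Q₀ with hL
  set R := Q % Q₀ with hR
  have hRdeg : R.degree < Q₀.degree := Polynomial.degree_mod_lt Q hQ
  have hSQ : (P - L * P₀) * Q₀ = P₀ * R := by
    linear_combination hc - P₀ * hdiv
  have hR0 : R = 0 := by
    by_contra hR0
    have hlt : R.natDegree < Q₀.natDegree := Polynomial.natDegree_lt_natDegree hR0 hRdeg
    have hsol : IsPadeSolution F n (P - L * P₀) R := by
      refine ⟨?_, hRdeg.le.trans hs.2.1, ?_⟩
      · by_cases hS : P - L * P₀ = 0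
        · simp [hS]
        have hP0 : P₀ ≠ 0 := by
          rintro h
          rw [h, zero_mul] at hSQ
          exact (mul_ne_zero (by simpa [h] using hS) hQ) (by simpa [h] using hSQ)
        have h1 := congrArg Polynomial.natDegree hSQ
        rw [Polynomial.natDegree_mul hS hQ, Polynomial.natDegree_mul hP0 hR0] at h1
        have h2 := Polynomial.natDegree_le_of_degree_le hs.1
        exact Polynomial.degree_le_of_natDegree_le (by omega)
      · have := dvd_sub hPQ.2.2 (hs.2.2.mul_left (L : PowerSeries ℂ))
        convert this using 1
        have hRe : R = Q - Q₀ * L := by linear_combination hdiv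
        rw [hRe]
        push_cast
        ring
    exact Nat.find_min hex (hd ▸ hlt) ⟨_, _, hsol, hR0, rfl⟩
  refine ⟨L, ?_, ?_⟩
  · rw [hR0, mul_zero] at hSQ
    exact sub_eq_zero.mp ((mul_eq_zero.mp hSQ).resolve_right hQ)
  · linear_combination -hdiv + hR0
end

section
/- Let p, q be polynomials over ℂ with deg q ≤ n, and suppose there exist constants C > 0 and R ≥ R₀ such that |q(z)f(z) − p(z)| ≤ C·|z|^{−(n+1)} for all z ∈ ℂ with |z| ≥ R. Then the denominator q satisfies the non-Hermitian orthogonality relations ∫ t^k · q(t) · h(t) dμ(t) = 0 for every integer k with 0 ≤ k ≤ n − 1. -/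
open MeasureTheory Polynomial

lemma aux_poly (P : ℂ[X]) (hP : Filter.Tendsto (fun z => P.eval z) (Bornology.cobounded ℂ) (nhds 0)) :
    P = 0 := by
  have hn : Filter.Tendsto (fun z : ℂ => ‖z‖) (Bornology.cobounded ℂ) Filter.atTop :=
    tendsto_norm_cobounded_atTop
  by_cases hd : 0 < P.degree
  · have h1 := P.tendsto_norm_atTop hd hn
    have h2 := hP.norm
    exact absurd h2 (not_tendsto_nhds_of_tendsto_atTop h1 _)
  · have h3 := Polynomial.eq_C_of_degree_le_zero (not_lt.mp hd)
    rw [h3] at hP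
    simp only [eval_C] at hP
    have := tendsto_nhds_unique hP tendsto_const_nhds
    rw [h3, ← this, C_0]

lemma aux_mul (R₀ : ℝ) (μ : Measure ℂ) (hμ : ∀ᵐ t ∂μ, ‖t‖ ≤ R₀)
    (a : ℂ → ℂ) (ha : Integrable a μ) : Integrable (fun t => t * a t) μ :=
  ha.bdd_mul (c := R₀) measurable_id.aestronglyMeasurable hμ

lemma aux_bd (R₀ : ℝ) (z : ℂ) (hz : R₀ < ‖z‖) (t : ℂ) (ht : ‖t‖ ≤ R₀) :
    ‖(t - z)⁻¹‖ ≤ (‖z‖ - R₀)⁻¹ := by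
  rw [norm_inv]
  apply inv_anti₀ (by linarith)
  have := norm_sub_norm_le z t
  rw [norm_sub_rev] at this
  linarith

lemma aux_div (R₀ : ℝ) (μ : Measure ℂ) (hμ : ∀ᵐ t ∂μ, ‖t‖ ≤ R₀)
    (a : ℂ → ℂ) (ha : Integrable a μ) (z : ℂ) (hz : R₀ < ‖z‖) :
    Integrable (fun t => a t / (t - z)) μ := by
  simp_rw [div_eq_inv_mul]
  refine ha.bdd_mul (c := (‖z‖ - R₀)⁻¹) (by fun_prop) ?_
  filter_upwards [hμ] with t ht using aux_bd R₀ z hz t ht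

lemma aux_step (R₀ : ℝ) (μ : Measure ℂ) (hμ : ∀ᵐ t ∂μ, ‖t‖ ≤ R₀)
    (a : ℂ → ℂ) (ha : Integrable a μ) (z : ℂ) (hz : R₀ < ‖z‖) :
    z * ∫ t, a t / (t - z) ∂μ = (∫ t, (t * a t) / (t - z) ∂μ) - ∫ t, a t ∂μ := by
  rw [← integral_sub (aux_div R₀ μ hμ _ (aux_mul R₀ μ hμ a ha) z hz) ha, ← integral_const_mul]
  apply integral_congr_ae
  filter_upwards [hμ] with t ht
  have : t - z ≠ 0 := by
    intro h
    rw [sub_eq_zero] at h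
    subst h
    linarith
  field_simp
  ring

lemma aux_tendsto (R₀ : ℝ) (μ : Measure ℂ) (hμ : ∀ᵐ t ∂μ, ‖t‖ ≤ R₀)
    (a : ℂ → ℂ) (ha : Integrable a μ) :
    Filter.Tendsto (fun z => ∫ t, a t / (t - z) ∂μ) (Bornology.cobounded ℂ) (nhds 0) := by
  have hn : Filter.Tendsto (fun z : ℂ => ‖z‖) (Bornology.cobounded ℂ) Filter.atTop :=
    tendsto_norm_cobounded_atTop
  have h0 : Filter.Tendsto (fun z : ℂ => (‖z‖ - R₀)⁻¹ * ∫ t, ‖a t‖ ∂μ)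
      (Bornology.cobounded ℂ) (nhds 0) := by
    have := (Filter.tendsto_atTop_add_const_right _ (-R₀) hn).inv_tendsto_atTop.mul_const
      (∫ t, ‖a t‖ ∂μ)
    simpa [sub_eq_add_neg] using this
  refine squeeze_zero_norm' ?_ h0
  filter_upwards [hn.eventually_gt_atTop R₀] with z hz
  rw [← integral_const_mul]
  apply norm_integral_le_of_norm_le (ha.norm.const_mul _)
  filter_upwards [hμ] with t ht
  rw [div_eq_inv_mul, norm_mul]
  gcongr
  exact aux_bd R₀ z hz t ht

lemma aux_poly_mul (R₀ : ℝ) (μ : Measure ℂ) (hμ : ∀ᵐ t ∂μ, ‖t‖ ≤ R₀)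
    (a : ℂ → ℂ) (ha : Integrable a μ) (q : ℂ[X]) :
    Integrable (fun t => q.eval t * a t) μ ∧ ∃ P : ℂ[X], ∀ z : ℂ, R₀ < ‖z‖ →
      q.eval z * ∫ t, a t / (t - z) ∂μ = P.eval z + ∫ t, (q.eval t * a t) / (t - z) ∂μ := by
  induction q using Polynomial.induction_on with
  | C c =>
    simp only [eval_C]
    refine ⟨ha.const_mul c, 0, fun z hz => ?_⟩
    simp [mul_div_assoc, integral_const_mul]
  | add q r hq hr =>
    obtain ⟨hq, P, hP⟩ := hq
    obtain ⟨hr, Q, hQ⟩ := hr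
    simp only [eval_add, add_mul]
    refine ⟨hq.add hr, P + Q, fun z hz => ?_⟩
    simp only [add_div]
    rw [hP z hz, hQ z hz, integral_add (aux_div R₀ μ hμ _ hq z hz) (aux_div R₀ μ hμ _ hr z hz),
      eval_add]
    ring
  | monomial m c ih =>
    obtain ⟨hi, P, hP⟩ := ih
    have e : ∀ t : ℂ, (C c * X ^ (m + 1)).eval t = t * (C c * X ^ m).eval t := by
      intro t; simp; ring
    simp only [e, mul_assoc]
    refine ⟨aux_mul R₀ μ hμ _ hi, X * P - C (∫ t, (C c * X ^ m).eval t * a t ∂μ),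
      fun z hz => ?_⟩
    rw [hP z hz, mul_add, aux_step R₀ μ hμ _ hi z hz]
    simp only [eval_sub, eval_mul, eval_X, eval_C]
    ring

lemma aux_main (R₀ : ℝ) (μ : Measure ℂ) (hμ : ∀ᵐ t ∂μ, ‖t‖ ≤ R₀) (n : ℕ) :
    ∀ (a : ℂ → ℂ) (_ : Integrable a μ) (P : ℂ[X])
    (_ : Filter.Tendsto (fun z => z ^ n * (P.eval z + ∫ t, a t / (t - z) ∂μ))
      (Bornology.cobounded ℂ) (nhds 0)), P = 0 ∧ ∀ k < n, ∫ t, t ^ k * a t ∂μ = 0 := by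
  have hn : Filter.Tendsto (fun z : ℂ => ‖z‖) (Bornology.cobounded ℂ) Filter.atTop :=
    tendsto_norm_cobounded_atTop
  induction n with
  | zero =>
    intro a ha P h
    refine ⟨aux_poly P ?_, by simp⟩
    simpa using h.sub (aux_tendsto R₀ μ hμ a ha)
  | succ n ih =>
    intro a ha P h
    obtain ⟨h1, h2⟩ := ih _ (aux_mul R₀ μ hμ a ha) (X * P - C (∫ t, a t ∂μ)) (by
      refine h.congr' ?_
      filter_upwards [hn.eventually_gt_atTop R₀] with z hz
      have := aux_step R₀ μ hμ a ha z hz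
      simp only [eval_sub, eval_mul, eval_X, eval_C]
      linear_combination z ^ n * this)
    have h3 : ∫ t, a t ∂μ = 0 := by
      have := congrArg (fun Q : ℂ[X] => Q.eval 0) h1
      simpa using this
    refine ⟨?_, ?_⟩
    · rw [h3] at h1
      simpa [X_ne_zero] using h1
    · intro k hk
      cases k with
      | zero => simpa using h3
      | succ k =>
        rw [← h2 k (by omega)]
        congr 1; ext t; ring

/-- If `(p, q)` satisfies the Padé interpolation bound
`‖q(z)f(z) − p(z)‖ ≤ C·‖z‖^{−(n+1)}` for all large `z`, where `f` is the Cauchy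
transform of `h dμ`, then `q` satisfies the non-Hermitian orthogonality relations
`∫ tᵏ q(t) h(t) dμ(t) = 0` for `0 ≤ k ≤ n − 1`. -/
theorem pade_denominator_orthogonality
    (R₀ : ℝ) (hR₀ : 0 < R₀) (μ : Measure ℂ) [IsFiniteMeasure μ]
    (hμsupp : μ (Metric.closedBall 0 R₀)ᶜ = 0)
    (h : ℂ → ℂ) (hmeas : Measurable h) (M : ℝ) (hbdd : ∀ t : ℂ, ‖h t‖ ≤ M)
    (f : ℂ → ℂ) (hf : ∀ z : ℂ, f z = ∫ t, h t / (t - z) ∂μ)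
    (n : ℕ) (p q : Polynomial ℂ) (hq : q.degree ≤ (n : ℕ))
    (C R : ℝ) (hC : 0 < C) (hR : R₀ ≤ R)
    (herr : ∀ z : ℂ, R ≤ ‖z‖ → ‖q.eval z * f z - p.eval z‖ ≤ C / ‖z‖ ^ (n + 1)) :
    ∀ k : ℕ, k < n → ∫ t, t ^ k * q.eval t * h t ∂μ = 0 := by
  have hμ : ∀ᵐ t ∂μ, ‖t‖ ≤ R₀ := by
    rw [ae_iff]
    convert hμsupp using 2
    ext t
    simp
  have hh : Integrable h μ :=
    Integrable.of_bound hmeas.aestronglyMeasurable M (Filter.Eventually.of_forall hbdd)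
  have hn : Filter.Tendsto (fun z : ℂ => ‖z‖) (Bornology.cobounded ℂ) Filter.atTop :=
    tendsto_norm_cobounded_atTop
  obtain ⟨hi, P, hP⟩ := aux_poly_mul R₀ μ hμ h hh q
  have key := (aux_main R₀ μ hμ n _ hi (P - p) (by
    have h0 : Filter.Tendsto (fun z : ℂ => C * ‖z‖⁻¹) (Bornology.cobounded ℂ) (nhds 0) := by
      simpa using hn.inv_tendsto_atTop.const_mul C
    refine squeeze_zero_norm' ?_ h0
    filter_upwards [hn.eventually_gt_atTop R] with z hz
    have hz0 : 0 < ‖z‖ := by linarith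
    have e := herr z hz.le
    rw [hf z, hP z (by linarith)] at e
    rw [eval_sub, norm_mul, norm_pow]
    calc _ = ‖z‖ ^ n * ‖P.eval z + (∫ t, q.eval t * h t / (t - z) ∂μ) - p.eval z‖ := by
          congr 2; ring
      _ ≤ ‖z‖ ^ n * (C / ‖z‖ ^ (n + 1)) := by gcongr
      _ = _ := by field_simp; ring)).2
  intro k hk
  simpa [mul_assoc] using key k hk
end

section
/- Let p, q be polynomials over ℂ with deg q ≤ n, and suppose there exist constants C > 0 and R ≥ R₀ such that |q(z)f(z) − p(z)| ≤ C·|z|^{−(n+1)} for all z ∈ ℂ with |z| ≥ R. Then for every z ∈ ℂ with |z| > R₀ one has the exact remainder representation q(z)·f(z) − p(z) = ∫ q(t)·h(t)/(t − z) dμ(t). -/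
open MeasureTheory Polynomial

theorem aux_sub_bound {R₀ : ℝ} {t z : ℂ} (ht : t ∈ Metric.closedBall (0:ℂ) R₀) :
    ‖z‖ - R₀ ≤ ‖t - z‖ := by
  have h1 : ‖t‖ ≤ R₀ := by simpa using ht
  have h2 := norm_sub_norm_le z t
  rw [norm_sub_rev] at h2
  linarith

theorem aux_bound (R₀ : ℝ) (M : ℝ) (h : ℂ → ℂ) (hbdd : ∀ t : ℂ, ‖h t‖ ≤ M) (q : Polynomial ℂ) :
    ∃ B : ℝ, 0 ≤ B ∧ ∀ t ∈ Metric.closedBall (0:ℂ) R₀, ‖q.eval t * h t‖ ≤ B := by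
  obtain ⟨B, hB⟩ := (isCompact_closedBall (0:ℂ) R₀).exists_bound_of_continuousOn
    (f := fun t => q.eval t) q.continuous.continuousOn
  have hM : 0 ≤ M := (norm_nonneg _).trans (hbdd 0)
  refine ⟨max B 0 * M, by positivity, fun t ht => ?_⟩
  rw [norm_mul]
  exact mul_le_mul ((hB t ht).trans (le_max_left _ _)) (hbdd t) (norm_nonneg _) (le_max_right _ _)

theorem aux_bound2 (R₀ B : ℝ) (hB0 : 0 ≤ B) (g : ℂ → ℂ)
    (hB : ∀ t ∈ Metric.closedBall (0:ℂ) R₀, ‖g t‖ ≤ B) (z : ℂ) (hz : R₀ < ‖z‖) :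
    ∀ t ∈ Metric.closedBall (0:ℂ) R₀, ‖g t / (t - z)‖ ≤ B / (‖z‖ - R₀) := by
  intro t ht
  rw [norm_div]
  exact div_le_div₀ hB0 (hB t ht) (by linarith) (aux_sub_bound ht)

theorem aux_poly_s4 (R₀ : ℝ) (μ : Measure ℂ) [IsFiniteMeasure μ]
    (hae : ∀ᵐ t ∂μ, t ∈ Metric.closedBall (0:ℂ) R₀)
    (h : ℂ → ℂ) (hmeas : Measurable h) (M : ℝ) (hbdd : ∀ t : ℂ, ‖h t‖ ≤ M) (q : Polynomial ℂ) :
    ∃ P : Polynomial ℂ, ∀ z : ℂ, R₀ < ‖z‖ →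
      q.eval z * (∫ t, h t / (t - z) ∂μ) - ∫ t, q.eval t * h t / (t - z) ∂μ = P.eval z := by
  have hqm : ∀ q : Polynomial ℂ, Measurable fun t => q.eval t := fun q => q.continuous.measurable
  have hint : ∀ q : Polynomial ℂ, Integrable (fun t => q.eval t * h t) μ := by
    intro q
    obtain ⟨B, hB0, hB⟩ := aux_bound R₀ M h hbdd q
    exact Integrable.of_bound ((hqm q).mul hmeas).aestronglyMeasurable B
      (hae.mono hB)
  have hint2 : ∀ q : Polynomial ℂ, ∀ z : ℂ, R₀ < ‖z‖ →
      Integrable (fun t => q.eval t * h t / (t - z)) μ := by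
    intro q z hz
    obtain ⟨B, hB0, hB⟩ := aux_bound R₀ M h hbdd q
    exact Integrable.of_bound
      (((hqm q).mul hmeas).div (measurable_id.sub_const z)).aestronglyMeasurable _
      (hae.mono (aux_bound2 R₀ B hB0 _ hB z hz))
  induction q using Polynomial.induction_on with
  | C a =>
    refine ⟨0, fun z hz => ?_⟩
    simp only [eval_C, mul_div_assoc, integral_const_mul, sub_self, eval_zero]
  | add q r hq hr =>
    obtain ⟨P, hP⟩ := hq
    obtain ⟨Q, hQ⟩ := hr
    refine ⟨P + Q, fun z hz => ?_⟩
    simp only [eval_add, add_mul, add_div]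
    rw [integral_add (hint2 q z hz) (hint2 r z hz), ← hP z hz, ← hQ z hz]
    ring
  | monomial k a hk =>
    obtain ⟨P, hP⟩ := hk
    set q : Polynomial ℂ := C a * X ^ k with hq
    refine ⟨X * P - C (∫ t, q.eval t * h t ∂μ), fun z hz => ?_⟩
    have e : C a * X ^ (k+1) = X * q := by rw [hq]; ring
    have key : ∫ t, (X * q).eval t * h t / (t - z) ∂μ
        = ∫ t, q.eval t * h t ∂μ + z * ∫ t, q.eval t * h t / (t - z) ∂μ := by
      rw [← integral_const_mul, ← integral_add (hint q) ((hint2 q z hz).const_mul z)]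
      refine integral_congr_ae (hae.mono fun t ht => ?_)
      have h1 := aux_sub_bound (z := z) ht
      have h2 : t - z ≠ 0 := norm_pos_iff.1 (by linarith)
      simp only [eval_mul, eval_X]
      field_simp
      ring
    rw [e, key]
    simp only [eval_mul, eval_X, eval_sub, eval_C]
    rw [← hP z hz]
    ring

/-- If `(p, q)` satisfies the Padé interpolation bound
`‖q(z)f(z) − p(z)‖ ≤ C·‖z‖^{−(n+1)}` for all large `z`, where `f` is the Cauchy
transform of `h dμ`, then the exact remainder representation
`q(z)f(z) − p(z) = ∫ q(t)h(t)/(t − z) dμ(t)` holds for all `‖z‖ > R₀`. -/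
theorem pade_remainder_representation
    (R₀ : ℝ) (hR₀ : 0 < R₀) (μ : Measure ℂ) [IsFiniteMeasure μ]
    (hμsupp : μ (Metric.closedBall 0 R₀)ᶜ = 0)
    (h : ℂ → ℂ) (hmeas : Measurable h) (M : ℝ) (hbdd : ∀ t : ℂ, ‖h t‖ ≤ M)
    (f : ℂ → ℂ) (hf : ∀ z : ℂ, f z = ∫ t, h t / (t - z) ∂μ)
    (n : ℕ) (p q : Polynomial ℂ) (hq : q.degree ≤ (n : ℕ))
    (C R : ℝ) (hC : 0 < C) (hR : R₀ ≤ R)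
    (herr : ∀ z : ℂ, R ≤ ‖z‖ → ‖q.eval z * f z - p.eval z‖ ≤ C / ‖z‖ ^ (n + 1)) :
    ∀ z : ℂ, R₀ < ‖z‖ →
      q.eval z * f z - p.eval z = ∫ t, q.eval t * h t / (t - z) ∂μ := by
  have hae : ∀ᵐ t ∂μ, t ∈ Metric.closedBall (0:ℂ) R₀ := hμsupp
  obtain ⟨P, hP⟩ := aux_poly_s4 R₀ μ hae h hmeas M hbdd q
  obtain ⟨B, hB0, hB⟩ := aux_bound R₀ M h hbdd q
  have hbd : ∀ x : ℝ, R < x → ‖(P - p).eval (x:ℂ)‖ ≤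
      C / x ^ (n+1) + B / (x - R₀) * μ.real Set.univ := by
    intro x hx
    have hn : ‖(x:ℂ)‖ = x := by
      rw [Complex.norm_real, Real.norm_of_nonneg (by linarith)]
    have h1 := herr x (by rw [hn]; exact hx.le)
    have hz : R₀ < ‖(x:ℂ)‖ := by rw [hn]; linarith
    have h2 := norm_integral_le_of_norm_le_const
      (hae.mono (aux_bound2 R₀ B hB0 _ hB x hz))
    rw [hn] at h1 h2
    rw [eval_sub, ← hP x hz, ← hf]
    refine le_trans ?_ (add_le_add h1 h2)
    refine le_trans (le_of_eq ?_) (norm_sub_le _ _)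
    congr 1
    ring
  have hlim : Filter.Tendsto (fun x : ℝ => C / x ^ (n+1) + B / (x - R₀) * μ.real Set.univ)
      Filter.atTop (nhds 0) := by
    have h1 : Filter.Tendsto (fun x : ℝ => C / x ^ (n+1)) Filter.atTop (nhds 0) :=
      (Filter.tendsto_pow_atTop (Nat.succ_ne_zero n)).const_div_atTop C
    have h2 : Filter.Tendsto (fun x : ℝ => B / (x - R₀)) Filter.atTop (nhds 0) :=
      (Filter.tendsto_atTop_add_const_right _ (-R₀) Filter.tendsto_id).const_div_atTop B
    simpa using h1.add (h2.mul_const (μ.real Set.univ))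
  have hlim2 : Filter.Tendsto (fun x : ℝ => ‖(P - p).eval (x:ℂ)‖) Filter.atTop (nhds 0) := by
    refine squeeze_zero' (Filter.Eventually.of_forall fun _ => norm_nonneg _) ?_ hlim
    filter_upwards [Filter.eventually_gt_atTop R] with x hx using hbd x hx
  have hzero : P - p = 0 := by
    by_cases hd : 0 < (P - p).degree
    · have h3 : Filter.Tendsto (fun x : ℝ => ‖(x:ℂ)‖) Filter.atTop Filter.atTop := by
        simpa using Filter.tendsto_abs_atTop_atTop (G := ℝ)
      exact absurd hlim2 (not_tendsto_nhds_of_tendsto_atTop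
        (Polynomial.tendsto_norm_atTop _ hd h3) 0)
    · have h4 := Polynomial.eq_C_of_degree_le_zero (not_lt.1 hd)
      rw [h4] at hlim2 ⊢
      simp only [eval_C] at hlim2
      have := tendsto_nhds_unique hlim2 tendsto_const_nhds
      rw [norm_eq_zero.1 this.symm, C_0]
  intro z hz
  have h5 := hP z hz
  rw [sub_eq_zero.1 hzero, ← hf] at h5
  rw [← h5]
  ring
end

section
/- Let q be a polynomial over ℂ satisfying the orthogonality relations ∫ t^k · q(t) · h(t) dμ(t) = 0 for every integer k with 0 ≤ k ≤ n − 1. Then the function of the second kind g(z) := ∫ q(t)·h(t)/(t − z) dμ(t) decays like z^{−(n+1)} at infinity: there exists a constant C > 0 such that |g(z)| ≤ C·|z|^{−(n+1)} for all z ∈ ℂ with |z| ≥ 2R₀. -/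
open MeasureTheory Polynomial

/-- If the polynomial `q` satisfies the non-Hermitian orthogonality relations
`∫ tᵏ q(t) h(t) dμ(t) = 0` for `0 ≤ k ≤ n − 1`, then its function of the second
kind `g(z) = ∫ q(t)h(t)/(t − z) dμ(t)` decays like `z^{−(n+1)}` at infinity. -/
theorem second_kind_function_decay
    (R₀ : ℝ) (hR₀ : 0 < R₀) (μ : Measure ℂ) [IsFiniteMeasure μ]
    (hμsupp : μ (Metric.closedBall 0 R₀)ᶜ = 0)
    (h : ℂ → ℂ) (hmeas : Measurable h) (M : ℝ) (hbdd : ∀ t : ℂ, ‖h t‖ ≤ M)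
    (n : ℕ) (q : Polynomial ℂ)
    (horth : ∀ k : ℕ, k < n → ∫ t, t ^ k * q.eval t * h t ∂μ = 0) :
    ∃ C : ℝ, 0 < C ∧ ∀ z : ℂ, 2 * R₀ ≤ ‖z‖ →
      ‖∫ t, q.eval t * h t / (t - z) ∂μ‖ ≤ C / ‖z‖ ^ (n + 1) := by
  have hae : ∀ᵐ t ∂μ, ‖t‖ ≤ R₀ := by
    have h1 : ∀ᵐ t ∂μ, t ∈ Metric.closedBall (0 : ℂ) R₀ := mem_ae_iff.mpr hμsupp
    filter_upwards [h1] with t ht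
    simpa using ht
  obtain ⟨B, hB⟩ : ∃ B : ℝ, ∀ t ∈ Metric.closedBall (0 : ℂ) R₀, ‖q.eval t‖ ≤ B :=
    (isCompact_closedBall (0 : ℂ) R₀).exists_bound_of_continuousOn q.continuous.continuousOn
  have hB' : ∀ t : ℂ, ‖t‖ ≤ R₀ → ‖q.eval t‖ ≤ B := fun t ht => hB t (by simpa using ht)
  have hB0 : 0 ≤ B := (norm_nonneg _).trans (hB' 0 (by simpa using hR₀.le))
  have hM0 : 0 ≤ M := (norm_nonneg _).trans (hbdd 0)
  have hqm : Measurable fun t : ℂ => q.eval t := q.continuous.measurable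
  have hb1 : ∀ k : ℕ, ∀ t : ℂ, ‖t‖ ≤ R₀ → ‖t ^ k * q.eval t * h t‖ ≤ R₀ ^ k * B * M := by
    intro k t ht
    rw [norm_mul, norm_mul, norm_pow]
    have := hB' t ht
    have := hbdd t
    gcongr
  have hI1 : ∀ k : ℕ, Integrable (fun t : ℂ => t ^ k * q.eval t * h t) μ := by
    intro k
    refine Integrable.of_bound (by fun_prop) (R₀ ^ k * B * M) ?_
    filter_upwards [hae] with t ht using hb1 k t ht
  refine ⟨R₀ ^ n * B * M * 2 * μ.real Set.univ + 1, by positivity, fun z hz => ?_⟩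
  have hz0 : 0 < ‖z‖ := by linarith
  have hd : ∀ t : ℂ, ‖t‖ ≤ R₀ → ‖z‖ / 2 ≤ ‖t - z‖ := by
    intro t ht
    have := norm_sub_norm_le z t
    rw [norm_sub_rev] at this
    linarith
  have hb2 : ∀ k : ℕ, ∀ t : ℂ, ‖t‖ ≤ R₀ →
      ‖t ^ k * q.eval t * h t / (t - z)‖ ≤ R₀ ^ k * B * M / (‖z‖ / 2) := by
    intro k t ht
    rw [norm_div]
    have := hb1 k t ht
    have := hd t ht
    gcongr
  have hI2 : ∀ k : ℕ, Integrable (fun t : ℂ => t ^ k * q.eval t * h t / (t - z)) μ := by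
    intro k
    refine Integrable.of_bound (Measurable.aestronglyMeasurable (by fun_prop))
      (R₀ ^ k * B * M / (‖z‖ / 2)) ?_
    filter_upwards [hae] with t ht using hb2 k t ht
  have hrec : ∀ k : ℕ, k ≤ n → ∫ t, t ^ k * q.eval t * h t / (t - z) ∂μ
      = z ^ k * ∫ t, q.eval t * h t / (t - z) ∂μ := by
    intro k
    induction k with
    | zero => intro _; simp
    | succ k ih =>
      intro hk
      have h1 : ∫ t, t ^ (k + 1) * q.eval t * h t / (t - z) ∂μ
          = ∫ t, (t ^ k * q.eval t * h t + z * (t ^ k * q.eval t * h t / (t - z))) ∂μ := by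
        refine integral_congr_ae ?_
        filter_upwards [hae] with t ht
        have hne : t - z ≠ 0 := by
          rw [← norm_pos_iff]
          have := hd t ht
          linarith
        field_simp
        ring
      rw [h1, integral_add (hI1 k) ((hI2 k).const_mul z), integral_const_mul, horth k (by omega),
        ih (by omega)]
      ring
  have hfin : ‖∫ t, t ^ n * q.eval t * h t / (t - z) ∂μ‖
      ≤ R₀ ^ n * B * M / (‖z‖ / 2) * μ.real Set.univ :=
    norm_integral_le_of_norm_le_const (by filter_upwards [hae] with t ht using hb2 n t ht)
  rw [hrec n le_rfl, norm_mul, norm_pow] at hfin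
  rw [le_div_iff₀ (by positivity)]
  have h3 := mul_le_mul_of_nonneg_right hfin hz0.le
  have h4 : R₀ ^ n * B * M / (‖z‖ / 2) * μ.real Set.univ * ‖z‖
      = R₀ ^ n * B * M * 2 * μ.real Set.univ := by
    field_simp
  rw [h4] at h3
  rw [pow_succ]
  linarith
end

section
/- Let q be a polynomial over ℂ with deg q ≤ n satisfying the orthogonality relations ∫ t^k · q(t) · h(t) dμ(t) = 0 for every integer k with 0 ≤ k ≤ n − 1. Then for every z ∈ ℂ not in the support of μ one has the reproducing identity q(z) · ∫ q(t)·h(t)/(t − z) dμ(t) = ∫ q(t)²·h(t)/(t − z) dμ(t). -/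
open MeasureTheory Polynomial

/-- The (closed) support of a Borel measure on `ℂ`: points all of whose
neighborhoods have positive measure. -/
def measureSupport (μ : Measure ℂ) : Set ℂ :=
  {z : ℂ | ∀ ε : ℝ, 0 < ε → 0 < μ (Metric.ball z ε)}

lemma poly_int (R₀ : ℝ) (μ : Measure ℂ) [IsFiniteMeasure μ]
    (hμsupp : μ (Metric.closedBall 0 R₀)ᶜ = 0)
    (h : ℂ → ℂ) (hmeas : Measurable h) (M : ℝ) (hbdd : ∀ t : ℂ, ‖h t‖ ≤ M)
    (g : ℂ → ℂ) (hg : Continuous g) : Integrable (fun t => g t * h t) μ := by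
  obtain ⟨C, hC⟩ := (isCompact_closedBall (0 : ℂ) R₀).exists_bound_of_continuousOn hg.continuousOn
  refine Integrable.of_bound (C := C * M) (hg.measurable.mul hmeas).aestronglyMeasurable ?_
  have h1 : ∀ᵐ t ∂μ, t ∈ Metric.closedBall (0 : ℂ) R₀ := hμsupp
  filter_upwards [h1] with t ht
  rw [norm_mul]
  exact mul_le_mul (hC t ht) (hbdd t) (norm_nonneg _) ((norm_nonneg _).trans (hC t ht))

/-- If `q` has degree at most `n` and satisfies the non-Hermitian orthogonality
relations `∫ tᵏ q(t) h(t) dμ(t) = 0` for `0 ≤ k ≤ n − 1`, then for every `z`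
outside the support of `μ` the reproducing identity
`q(z)·∫ q(t)h(t)/(t − z) dμ(t) = ∫ q(t)² h(t)/(t − z) dμ(t)` holds. -/
theorem orthogonality_reproducing_identity
    (R₀ : ℝ) (hR₀ : 0 < R₀) (μ : Measure ℂ) [IsFiniteMeasure μ]
    (hμsupp : μ (Metric.closedBall 0 R₀)ᶜ = 0)
    (h : ℂ → ℂ) (hmeas : Measurable h) (M : ℝ) (hbdd : ∀ t : ℂ, ‖h t‖ ≤ M)
    (n : ℕ) (q : Polynomial ℂ) (hq : q.degree ≤ (n : ℕ))
    (horth : ∀ k : ℕ, k < n → ∫ t, t ^ k * q.eval t * h t ∂μ = 0) :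
    ∀ z : ℂ, z ∉ measureSupport μ →
      q.eval z * ∫ t, q.eval t * h t / (t - z) ∂μ
        = ∫ t, (q.eval t) ^ 2 * h t / (t - z) ∂μ := by
  intro z hz
  simp only [measureSupport, Set.mem_ofPred_eq, not_forall, not_lt, nonpos_iff_eq_zero] at hz
  obtain ⟨ε, hε, hz⟩ := hz
  have hae : ∀ᵐ t ∂μ, ε ≤ ‖t - z‖ := by
    have : ∀ᵐ t ∂μ, t ∉ Metric.ball z ε := measure_eq_zero_iff_ae_notMem.1 hz
    filter_upwards [this] with t ht
    simpa [dist_eq_norm] using ht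
  have hI := fun g hg => poly_int R₀ μ hμsupp h hmeas M hbdd g hg
  obtain ⟨p, hp⟩ : ∃ p, p = q /ₘ (X - C z) := ⟨_, rfl⟩
  have hqp : ∀ t, q.eval t = q.eval z + (t - z) * p.eval t := by
    intro t
    have := congrArg (Polynomial.eval t) (modByMonic_add_div q (X - C z))
    rw [modByMonic_X_sub_C_eq_C_eval, ← hp] at this
    simpa using this.symm
  have hdeg : p = 0 ∨ p.natDegree < n := by
    by_cases h0 : p = 0
    · exact Or.inl h0
    right
    have hq0 : q ≠ 0 := by
      rintro rfl
      simp at hp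
      exact h0 hp
    have := degree_divByMonic_lt q (X - C z) hq0 (by simp)
    rw [← hp] at this
    exact (natDegree_lt_iff_degree_lt h0).2 (this.trans_le hq)
  have hz0 : ∫ t, p.eval t * q.eval t * h t ∂μ = 0 := by
    rcases hdeg with h0 | hd
    · simp [h0]
    have : ∀ t, p.eval t * q.eval t * h t
        = ∑ k ∈ Finset.range n, p.coeff k * (t ^ k * q.eval t * h t) := by
      intro t
      rw [eval_eq_sum_range' hd, Finset.sum_mul, Finset.sum_mul]
      refine Finset.sum_congr rfl fun k _ => by ring
    simp_rw [this]
    rw [integral_finsetSum]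
    · refine Finset.sum_eq_zero fun k hk => ?_
      rw [integral_const_mul, horth k (Finset.mem_range.1 hk), mul_zero]
    · intro k _
      exact (hI (fun t => t ^ k * q.eval t) (by fun_prop)).const_mul _
  have hI2 : Integrable (fun t => q.eval t * h t / (t - z)) μ := by
    have h1 := hI (fun t => q.eval t) (by fun_prop)
    simp_rw [div_eq_mul_inv]
    refine h1.mul_bdd (c := ε⁻¹) (by fun_prop) ?_
    filter_upwards [hae] with t ht
    rw [norm_inv]
    exact inv_anti₀ hε ht
  have hI1 := hI (fun t => p.eval t * q.eval t) (by fun_prop)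
  rw [← integral_const_mul, ← add_zero (∫ t, _ ∂μ), ← hz0, ← integral_add (hI2.const_mul _) hI1]
  refine integral_congr_ae ?_
  filter_upwards [hae] with t ht
  have hne : t - z ≠ 0 := norm_pos_iff.1 (hε.trans_le ht)
  field_simp
  linear_combination (-(q.eval t * h t)) * hqp t
end

section
/- Let p, q be polynomials over ℂ with deg q ≤ n, and suppose there exist constants C > 0 and R ≥ R₀ such that |q(z)f(z) − p(z)| ≤ C·|z|^{−(n+1)} for all z ∈ ℂ with |z| ≥ R. Then the error of Padé approximation admits the integral representation f(z) − p(z)/q(z) = (1/q(z)²) · ∫ q(t)²·h(t)/(t − z) dμ(t) for every z ∈ ℂ with |z| > R₀ and q(z) ≠ 0. -/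
open MeasureTheory Polynomial

lemma pade_aux_bound (R₀ : ℝ) (hR₀ : 0 < R₀) (μ : Measure ℂ) 
    (hμsupp : μ (Metric.closedBall 0 R₀)ᶜ = 0)
    (h : ℂ → ℂ) (M : ℝ) (hbdd : ∀ t : ℂ, ‖h t‖ ≤ M) (s : Polynomial ℂ) :
    ∃ K : ℝ, (∀ᵐ t ∂μ, ‖s.eval t * h t‖ ≤ K) ∧
      ∀ z : ℂ, R₀ < ‖z‖ → ∀ᵐ t ∂μ, t - z ≠ 0 ∧ ‖s.eval t * h t / (t - z)‖ ≤ K / (‖z‖ - R₀) := by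
  obtain ⟨K, hK⟩ := (isCompact_closedBall (0 : ℂ) R₀).exists_bound_of_continuousOn
    s.continuous.continuousOn
  have hae : ∀ᵐ t ∂μ, t ∈ Metric.closedBall (0 : ℂ) R₀ := hμsupp
  have hK0 : 0 ≤ K := (norm_nonneg _).trans (hK 0 (by simp [hR₀.le]))
  have key : ∀ᵐ t ∂μ, ‖s.eval t * h t‖ ≤ K * M := by
    filter_upwards [hae] with t ht
    rw [norm_mul]
    exact mul_le_mul (hK t ht) (hbdd t) (norm_nonneg _) hK0
  refine ⟨K * M, key, fun z hz => ?_⟩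
  filter_upwards [hae, key] with t ht hk
  have h1 : ‖t‖ ≤ R₀ := by simpa using ht
  have h2 : ‖z‖ - R₀ ≤ ‖t - z‖ := by
    have := norm_sub_norm_le z t
    rw [norm_sub_rev] at this
    linarith
  have h3 : 0 < ‖z‖ - R₀ := by linarith
  refine ⟨norm_pos_iff.1 (h3.trans_le h2), ?_⟩
  rw [norm_div]
  exact div_le_div₀ ((norm_nonneg _).trans hk) hk h3 h2

lemma pade_aux_poly (R₀ : ℝ) (hR₀ : 0 < R₀) (μ : Measure ℂ) [IsFiniteMeasure μ]
    (hμsupp : μ (Metric.closedBall 0 R₀)ᶜ = 0)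
    (h : ℂ → ℂ) (hmeas : Measurable h) (M : ℝ) (hbdd : ∀ t : ℂ, ‖h t‖ ≤ M) (s : Polynomial ℂ) :
    ∃ P : Polynomial ℂ, ∀ z : ℂ, R₀ < ‖z‖ →
      ∫ t, s.eval t * h t / (t - z) ∂μ = s.eval z * (∫ t, h t / (t - z) ∂μ) + P.eval z := by
  have hint : ∀ (s : Polynomial ℂ) (z : ℂ), R₀ < ‖z‖ →
      Integrable (fun t => s.eval t * h t / (t - z)) μ := by
    intro s z hz
    obtain ⟨K, -, hK⟩ := pade_aux_bound R₀ hR₀ μ hμsupp h M hbdd s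
    refine Integrable.of_bound (C := K / (‖z‖ - R₀)) ?_ ((hK z hz).mono fun t ht => ht.2)
    have := s.continuous.measurable
    exact ((this.mul hmeas).div (measurable_id.sub_const z)).aestronglyMeasurable
  have hint0 : ∀ (s : Polynomial ℂ), Integrable (fun t => s.eval t * h t) μ := by
    intro s
    obtain ⟨K, hK, -⟩ := pade_aux_bound R₀ hR₀ μ hμsupp h M hbdd s
    refine Integrable.of_bound (C := K) ?_ hK
    exact (s.continuous.measurable.mul hmeas).aestronglyMeasurable
  induction s using Polynomial.induction_on with
  | C a =>
    refine ⟨0, fun z hz => ?_⟩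
    simp [mul_div_assoc, integral_const_mul]
  | add s₁ s₂ h₁ h₂ =>
    obtain ⟨P₁, h₁⟩ := h₁
    obtain ⟨P₂, h₂⟩ := h₂
    refine ⟨P₁ + P₂, fun z hz => ?_⟩
    simp only [eval_add, add_mul, add_div]
    rw [integral_add (hint s₁ z hz) (hint s₂ z hz), h₁ z hz, h₂ z hz]
    ring
  | monomial k a ih =>
    obtain ⟨P, ih⟩ := ih
    set s := C a * X ^ k with hs
    refine ⟨C (∫ t, s.eval t * h t ∂μ) + X * P, fun z hz => ?_⟩
    have e : C a * X ^ (k + 1) = s * X := by rw [hs]; ring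
    rw [e]
    obtain ⟨K, -, hK⟩ := pade_aux_bound R₀ hR₀ μ hμsupp h M hbdd s
    have : ∫ t, (s * X).eval t * h t / (t - z) ∂μ
        = ∫ t, (s.eval t * h t + z * (s.eval t * h t / (t - z))) ∂μ := by
      refine integral_congr_ae ?_
      filter_upwards [hK z hz] with t ht
      have := ht.1
      simp only [eval_mul, eval_X]
      field_simp
      ring
    rw [this, integral_add (hint0 s) ((hint s z hz).const_mul z), integral_const_mul, ih z hz]
    simp only [eval_add, eval_mul, eval_C, eval_X]
    ring

lemma pade_aux_growth (n : ℕ) (q : Polynomial ℂ) (hq : q.degree ≤ (n : ℕ)) :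
    ∃ B : ℝ, 0 ≤ B ∧ ∀ z : ℂ, 1 ≤ ‖z‖ → ‖q.eval z‖ ≤ B * ‖z‖ ^ n := by
  refine ⟨∑ i ∈ Finset.range (n + 1), ‖q.coeff i‖, by positivity, fun z hz => ?_⟩
  rw [eval_eq_sum_range' (n := n + 1) (Nat.lt_succ_of_le (natDegree_le_of_degree_le hq)),
    Finset.sum_mul]
  refine norm_sum_le_of_le _ fun i hi => ?_
  rw [norm_mul, norm_pow]
  gcongr
  · exact Nat.lt_succ_iff.1 (Finset.mem_range.1 hi)

lemma pade_aux_zero (P : Polynomial ℂ)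
    (hP : Filter.Tendsto (fun m : ℕ => P.eval (m : ℂ)) Filter.atTop (nhds 0)) : P = 0 := by
  by_cases hd : 0 < P.degree
  · have h1 : Filter.Tendsto (fun m : ℕ => ‖P.eval (m : ℂ)‖) Filter.atTop Filter.atTop := by
      refine P.tendsto_norm_atTop hd ?_
      simpa using tendsto_natCast_atTop_atTop (R := ℝ)
    exact absurd hP.norm (not_tendsto_nhds_of_tendsto_atTop h1 _)
  · rw [eq_C_of_degree_le_zero (not_lt.1 hd)] at hP ⊢
    simp only [eval_C] at hP
    rw [tendsto_nhds_unique tendsto_const_nhds hP, C_0]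

/-- If `(p, q)` satisfies the Padé interpolation bound
`‖q(z)f(z) − p(z)‖ ≤ C·‖z‖^{−(n+1)}` for all large `z`, where `f` is the Cauchy
transform of `h dμ`, then the error of Padé approximation admits the integral
representation `f(z) − p(z)/q(z) = q(z)⁻² ∫ q(t)² h(t)/(t − z) dμ(t)`. -/
theorem pade_error_integral_representation
    (R₀ : ℝ) (hR₀ : 0 < R₀) (μ : Measure ℂ) [IsFiniteMeasure μ]
    (hμsupp : μ (Metric.closedBall 0 R₀)ᶜ = 0)
    (h : ℂ → ℂ) (hmeas : Measurable h) (M : ℝ) (hbdd : ∀ t : ℂ, ‖h t‖ ≤ M)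
    (f : ℂ → ℂ) (hf : ∀ z : ℂ, f z = ∫ t, h t / (t - z) ∂μ)
    (n : ℕ) (p q : Polynomial ℂ) (hq : q.degree ≤ (n : ℕ))
    (C R : ℝ) (hC : 0 < C) (hR : R₀ ≤ R)
    (herr : ∀ z : ℂ, R ≤ ‖z‖ → ‖q.eval z * f z - p.eval z‖ ≤ C / ‖z‖ ^ (n + 1)) :
    ∀ z : ℂ, R₀ < ‖z‖ → q.eval z ≠ 0 →
      f z - p.eval z / q.eval z
        = (1 / (q.eval z) ^ 2) * ∫ t, (q.eval t) ^ 2 * h t / (t - z) ∂μ := by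
  obtain ⟨P, hP⟩ := pade_aux_poly R₀ hR₀ μ hμsupp h hmeas M hbdd (q ^ 2)
  obtain ⟨K, -, hK⟩ := pade_aux_bound R₀ hR₀ μ hμsupp h M hbdd (q ^ 2)
  obtain ⟨B, hB0, hB⟩ := pade_aux_growth n q hq
  simp only [← hf, eval_pow] at hP hK
  have hzero : P + q * p = 0 := by
    apply pade_aux_zero
    apply squeeze_zero_norm' (a := fun m : ℕ => K * μ.real Set.univ * ((m : ℝ) - R₀)⁻¹
      + B * C * (m : ℝ)⁻¹)
    · filter_upwards [Filter.eventually_gt_atTop 0,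
        tendsto_natCast_atTop_atTop.eventually_gt_atTop R] with m hm hmR
      have hn : ‖(m : ℂ)‖ = m := by simp
      have hm1 : (1 : ℝ) ≤ m := by exact_mod_cast hm
      have hz : R₀ < ‖(m : ℂ)‖ := by rw [hn]; linarith
      have e : (P + q * p).eval (m : ℂ)
          = (∫ t, (q.eval t) ^ 2 * h t / (t - m) ∂μ)
            - q.eval (m : ℂ) * (q.eval (m : ℂ) * f m - p.eval (m : ℂ)) := by
        rw [hP _ hz]; simp only [eval_add, eval_mul]; ring
      rw [e]
      refine (norm_sub_le _ _).trans (add_le_add ?_ ?_)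
      · refine (norm_integral_le_of_norm_le_const ((hK _ hz).mono fun t ht => ht.2)).trans
          (le_of_eq ?_)
        rw [hn]; ring
      · rw [norm_mul]
        have h1 := hB m (by rw [hn]; exact hm1)
        have h2 := herr m (by rw [hn]; exact hmR.le)
        refine (mul_le_mul h1 h2 (norm_nonneg _) (by positivity)).trans (le_of_eq ?_)
        rw [hn]
        have : (m : ℝ) ≠ 0 := by positivity
        field_simp
        ring
    · have t1 : Filter.Tendsto (fun m : ℕ => ((m : ℝ))⁻¹) Filter.atTop (nhds 0) :=
        tendsto_inv_atTop_zero.comp tendsto_natCast_atTop_atTop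
      have t2 : Filter.Tendsto (fun m : ℕ => ((m : ℝ) - R₀)⁻¹) Filter.atTop (nhds 0) :=
        tendsto_inv_atTop_zero.comp
          (Filter.tendsto_atTop_add_const_right _ (-R₀) tendsto_natCast_atTop_atTop)
      simpa using (t2.const_mul (K * μ.real Set.univ)).add (t1.const_mul (B * C))
  intro z hz hqz
  have hPz : P.eval z = - (q.eval z * p.eval z) := by
    have := congrArg (eval z) hzero
    simp only [eval_add, eval_mul, eval_zero] at this
    linear_combination this
  rw [hP z hz, hPz]
  field_simp
  ring
end
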